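/- Let -1/2 ≤ α < 1 and let f ∈ F(α). Then there exists a probability measure ν on [0, 2π] such that for all z ∈ 𝔻, f'(z) = ∫₀^{2π} (1 - e^{iθ} z)^{2α-2} dν(θ), where w ↦ w^{2α-2} denotes the principal branch of the complex power (well defined since Re(1 - e^{iθ}z) > 0 for |z| < 1). -/

import Mathlib

open Complex MeasureTheory Metric Set Real

/-- The class `F(α)`. -/
def zalcF (α : ℝ) : Set (ℂ → ℂ) :=
  {f | AnalyticOn ℂ f (ball 0 1) ∧ f 0 = 0 ∧ deriv f 0 = 1 ∧
       (∀ z ∈ ball (0:ℂ) 1, deriv f z ≠ 0) ∧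
       (∀ z ∈ ball (0:ℂ) 1, α < (1 + z * deriv (deriv f) z / deriv f z).re)}

open Filter Topology ProbabilityTheory

/-!
Put `β = 2 - 2α` and `g = f'`. By the Herglotz theorem, `1 + z g' / (β g)`, whose real part is at
least `1/2`, equals `∫ (1 - ζ z)⁻¹ dν(ζ)` for a probability measure `ν` on the unit circle, so that
`g z = exp (β ∫ -log (1 - ζ z) dν(ζ))`. This geometric mean of the kernels `(1 - ζ z)^(-β)` is the
limit of the `n`-th powers of the arithmetic means `∫ (1 - ζ z)^(-β/n) dν(ζ)`, so it is enough that
fractional Cauchy transforms of probability measures on the circle are closed under pointwise limits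
(weak compactness) and that their orders add under products.

For products, Feynman's identity `a^(-p) b^(-q) = ∫ (s a + (1 - s) b)^(-p-q) dB(s)`, with `B` the
beta distribution with parameters `p` and `q`, replaces the two points of the circle by one point
`s ζ + (1 - s) ξ` of the closed disc. The law of that point is swept to the circle: by Herglotz
again, some probability measure on the circle has the same Cauchy transform, hence the same
integrals of functions holomorphic near the closed disc.
-/

theorem exists_probabilityMeasure_integral_eq_of_tendsto {X ι κ : Type*} [TopologicalSpace X]
    [CompactSpace X] [T2Space X] [SecondCountableTopology X] [MeasurableSpace X] [BorelSpace X]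
    {l : Filter κ} [l.NeBot] {k : ι → X → ℂ} (hk : ∀ i, Continuous (k i))
    {μ : κ → ProbabilityMeasure X} {L : ι → ℂ}
    (h : ∀ i, Tendsto (fun n ↦ ∫ x, k i x ∂(μ n : Measure X)) l (𝓝 (L i))) :
    ∃ ν : ProbabilityMeasure X, ∀ i, L i = ∫ x, k i x ∂(ν : Measure X) := by
  let U := Ultrafilter.of l
  have hlim : Tendsto μ U (𝓝 (U.map μ).lim) := (U.map μ).le_nhds_lim
  refine ⟨(U.map μ).lim, fun i ↦ tendsto_nhds_unique ((h i).mono_left (Ultrafilter.of_le l)) ?_⟩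
  exact (ProbabilityMeasure.tendsto_iff_forall_integral_rclike_tendsto ℂ).1 hlim
    (BoundedContinuousFunction.mkOfCompact ⟨k i, hk i⟩)

theorem hasDerivAt_integral_of_norm_le {Ω : Type*} [MeasurableSpace Ω] {P : Measure Ω}
    [IsFiniteMeasure P] {F : ℂ → Ω → ℂ} {U : Set ℂ} {C : ℝ} (hU : IsOpen U)
    (hmeas : ∀ z, AEStronglyMeasurable (F z) P)
    (hdiff : ∀ᵐ ω ∂P, DifferentiableOn ℂ (F · ω) U) (hbound : ∀ᵐ ω ∂P, ∀ z ∈ U, ‖F z ω‖ ≤ C)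
    {z : ℂ} (hz : z ∈ U) :
    HasDerivAt (fun z ↦ ∫ ω, F z ω ∂P) (∫ ω, deriv (F · ω) z ∂P) z := by
  obtain ⟨r, hr, hrU⟩ : ∃ r > 0, closedBall z (r + r) ⊆ U := by
    obtain ⟨ε, hε, hεU⟩ := nhds_basis_closedBall.mem_iff.1 (hU.mem_nhds hz)
    exact ⟨ε / 2, by positivity, by rwa [add_halves]⟩
  have hmeas_deriv : AEStronglyMeasurable (fun ω ↦ deriv (F · ω) z) P := by
    refine aestronglyMeasurable_of_tendsto_ae (𝓝[≠] z)
      (f := fun w ω ↦ slope (F · ω) z w) (fun w ↦ ?_) ?_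
    · exact ((hmeas w).sub (hmeas z)).const_smul (w - z)⁻¹
    · filter_upwards [hdiff] with ω hd
      exact (hd.differentiableAt (hU.mem_nhds hz)).hasDerivAt.tendsto_slope
  have hball {x : ℂ} (hx : x ∈ ball z r) : closedBall x r ⊆ U :=
    (closedBall_subset_closedBall' (by gcongr; exact (mem_ball.1 hx).le)).trans hrU
  refine (hasDerivAt_integral_of_dominated_loc_of_deriv_le
    (F' := fun w ω ↦ deriv (F · ω) w) (bound := fun _ ↦ C / r)
    (ball_mem_nhds z hr) ?_ ?_ hmeas_deriv ?_ (integrable_const _) ?_).2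
  · exact .of_forall hmeas
  · exact .of_bound (hmeas z) C (hbound.mono fun ω h ↦ h z hz)
  · filter_upwards [hdiff, hbound] with ω hd hb x hx
    refine norm_deriv_le_of_forall_mem_sphere_norm_le hr
      (hd.mono ?_).diffContOnCl fun w hw ↦ hb w (hball hx (sphere_subset_closedBall hw))
    rw [closure_ball x hr.ne']
    exact hball hx
  · filter_upwards [hdiff] with ω hd x hx
    exact (hd.differentiableAt (hU.mem_nhds (hball hx (mem_closedBall_self hr.le)))).hasDerivAt

theorem norm_cpow_neg_le_of_le_re {w : ℂ} {δ r : ℝ} (hδ : 0 < δ) (hr : 0 ≤ r) (h : δ ≤ w.re) :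
    ‖w ^ (-(r : ℂ))‖ ≤ δ ^ (-r) := by
  rw [← ofReal_neg, norm_cpow_real]
  exact rpow_le_rpow_of_nonpos hδ (h.trans (re_le_norm w)) (neg_nonpos.2 hr)

theorem betaMeasure_ae_mem_Ioo (p q : ℝ) : ∀ᵐ s ∂betaMeasure p q, s ∈ Ioo (0 : ℝ) 1 := by
  have hpdf : Measurable (betaPDF p q) := (measurable_betaPDFReal p q).ennreal_ofReal
  rw [betaMeasure, ae_withDensity_iff hpdf]
  refine .of_forall fun s hs ↦ ?_
  by_contra h
  exact hs (by rw [betaPDF_eq, if_neg (mt mem_Ioo.2 h), ENNReal.ofReal_zero])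

theorem integral_betaMeasure {E : Type*} [NormedAddCommGroup E] [NormedSpace ℝ E] {p q : ℝ}
    (hp : 0 < p) (hq : 0 < q) (φ : ℝ → E) :
    ∫ s, φ s ∂betaMeasure p q =
      ∫ s in (0 : ℝ)..1, (1 / beta p q * s ^ (p - 1) * (1 - s) ^ (q - 1)) • φ s := by
  have hpdf : Measurable (betaPDF p q) := (measurable_betaPDFReal p q).ennreal_ofReal
  rw [betaMeasure, integral_withDensity_eq_integral_toReal_smul hpdf
      (.of_forall fun _ ↦ ENNReal.ofReal_lt_top),
    intervalIntegral.integral_of_le zero_le_one, integral_Ioc_eq_integral_Ioo,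
    ← integral_indicator measurableSet_Ioo]
  refine integral_congr_ae (.of_forall fun s ↦ ?_)
  by_cases hs : s ∈ Ioo (0 : ℝ) 1
  · have hpos := betaPDFReal_pos hs.1 hs.2 hp hq
    simp only [indicator_of_mem hs, betaPDF, ENNReal.toReal_ofReal hpos.le]
    rw [betaPDFReal, if_pos (mem_Ioo.1 hs)]
  · simp only [indicator_of_notMem hs, betaPDF, betaPDFReal]
    rw [if_neg (mt mem_Ioo.2 hs), ENNReal.ofReal_zero, ENNReal.toReal_zero, zero_smul]

theorem hasDerivAt_rpow_mul_one_sub_rpow {p q s : ℝ} (hs : s ∈ Ioo (0 : ℝ) 1) :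
    HasDerivAt (fun s : ℝ ↦ s ^ p * (1 - s) ^ q)
      (s ^ (p - 1) * (1 - s) ^ (q - 1) * (p * (1 - s) - q * s)) s := by
  have hs' : 0 < 1 - s := sub_pos.2 hs.2
  refine ((hasDerivAt_rpow_const (.inl hs.1.ne')).mul
    (((hasDerivAt_id s).const_sub 1).rpow_const (p := q) (.inl hs'.ne'))).congr_deriv ?_
  simp only [id]
  rw [show s ^ p = s ^ (p - 1) * s by rw [← rpow_add_one hs.1.ne', sub_add_cancel],
    show (1 - s) ^ q = (1 - s) ^ (q - 1) * (1 - s) by rw [← rpow_add_one hs'.ne', sub_add_cancel]]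
  ring

theorem intervalIntegrable_rpow_mul_one_sub_rpow {p q : ℝ} (hp : 0 < p) (hq : 0 < q) :
    IntervalIntegrable (fun s : ℝ ↦ s ^ (p - 1) * (1 - s) ^ (q - 1)) volume 0 1 := by
  have hconv := betaIntegral_convergent (u := p) (v := q) (by simpa) (by simpa)
  rw [intervalIntegrable_iff] at hconv ⊢
  refine IntegrableOn.congr_fun hconv.re (fun s hs ↦ ?_) measurableSet_uIoc
  rw [uIoc_of_le zero_le_one] at hs
  have : ((s : ℂ) ^ ((p : ℂ) - 1) * (1 - (s : ℂ)) ^ ((q : ℂ) - 1)) =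
      ((s ^ (p - 1) * (1 - s) ^ (q - 1) : ℝ) : ℂ) := by
    rw [ofReal_mul, ofReal_cpow hs.1.le, ofReal_cpow (sub_nonneg.2 hs.2)]
    push_cast
    rfl
  simp only [this, RCLike.re_to_complex, ofReal_re]

theorem integral_betaMeasure_stein {E : Type*} [NormedAddCommGroup E] [NormedSpace ℝ E]
    [CompleteSpace E] {p q : ℝ} (hp : 0 < p) (hq : 0 < q) {φ φ' : ℝ → E}
    (hφ : ContinuousOn φ (Icc 0 1)) (hderiv : ∀ s ∈ Ioo (0 : ℝ) 1, HasDerivAt φ (φ' s) s)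
    (hφ' : ContinuousOn φ' (Icc 0 1)) :
    ∫ s, ((s * (1 - s)) • φ' s + (p * (1 - s) - q * s) • φ s) ∂betaMeasure p q = 0 := by
  have hftc := intervalIntegral.integral_eq_sub_of_hasDerivAt_of_le
    (f := fun s : ℝ ↦ (s ^ p * (1 - s) ^ q) • φ s)
    (f' := fun s ↦ (s ^ (p - 1) * (1 - s) ^ (q - 1)) •
      ((s * (1 - s)) • φ' s + (p * (1 - s) - q * s) • φ s)) zero_le_one
    ?_ ?_ ?_
  · simp_rw [integral_betaMeasure hp hq, mul_assoc (1 / beta p q), mul_smul (1 / beta p q)]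
    rw [intervalIntegral.integral_smul, hftc]
    simp [Real.zero_rpow hp.ne', Real.zero_rpow hq.ne']
  · refine ContinuousOn.smul (Continuous.continuousOn ?_) hφ
    exact (continuous_rpow_const hp.le).mul
      ((continuous_rpow_const hq.le).comp (continuous_sub_left 1))
  · intro s hs
    refine ((hasDerivAt_rpow_mul_one_sub_rpow hs).smul (hderiv s hs)).congr_deriv ?_
    have hp' : s ^ p = s ^ (p - 1) * s := by rw [← rpow_add_one hs.1.ne', sub_add_cancel]
    have hq' : (1 - s) ^ q = (1 - s) ^ (q - 1) * (1 - s) := by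
      rw [← rpow_add_one (sub_pos.2 hs.2).ne', sub_add_cancel]
    rw [hp', hq']
    module
  · refine (intervalIntegrable_rpow_mul_one_sub_rpow hp hq).smul_continuousOn ?_
    rw [uIcc_of_le zero_le_one]
    fun_prop

theorem integrable_betaMeasure_of_continuousOn {E : Type*} [NormedAddCommGroup E] {p q : ℝ}
    (hp : 0 < p) (hq : 0 < q) {φ : ℝ → E} (hφ : ContinuousOn φ (Icc 0 1)) :
    Integrable φ (betaMeasure p q) := by
  have := isProbabilityMeasureBeta hp hq
  rw [← Measure.restrict_eq_self_of_ae_mem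
    ((betaMeasure_ae_mem_Ioo p q).mono fun s hs ↦ Ioo_subset_Icc_self hs)]
  exact hφ.integrableOn_compact isCompact_Icc

theorem cpow_eq_cpow_sub_one_mul {x : ℂ} (hx : x ≠ 0) (c : ℂ) : x ^ c = x ^ (c - 1) * x := by
  rw [cpow_sub _ _ hx, cpow_one, div_mul_cancel₀ _ hx]

section FeynmanIdentity

variable {p q s : ℝ} {a b : ℂ}

theorem min_re_le_re_convexComb (hs : s ∈ Icc (0 : ℝ) 1) :
    min a.re b.re ≤ ((s : ℂ) * a + (1 - s) * b).re := by
  have : ((s : ℂ) * a + (1 - s) * b).re = s * a.re + (1 - s) * b.re := by simp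
  nlinarith [mul_nonneg hs.1 (sub_nonneg.2 (min_le_left a.re b.re)),
    mul_nonneg (sub_nonneg.2 hs.2) (sub_nonneg.2 (min_le_right a.re b.re))]

theorem convexComb_mem_slitPlane (ha : 0 < a.re) (hb : 0 < b.re) (hs : s ∈ Icc (0 : ℝ) 1) :
    (s : ℂ) * a + (1 - s) * b ∈ slitPlane :=
  .inl ((lt_min ha hb).trans_le (min_re_le_re_convexComb hs))

theorem integral_betaMeasure_cpow_ibp (hp : 0 < p) (hq : 0 < q) (ha : 0 < a.re) (hb : 0 < b.re) :
    ∫ s : ℝ, (p * (1 - s) * b - q * s * a) *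
      ((s : ℂ) * a + (1 - s) * b) ^ (-((p + q : ℝ) : ℂ) - 1) ∂betaMeasure p q = 0 := by
  have hmem {s : ℝ} (hs : s ∈ Icc (0 : ℝ) 1) := convexComb_mem_slitPlane ha hb hs
  have hcont (c : ℂ) :
      ContinuousOn (fun s : ℝ ↦ ((s : ℂ) * a + (1 - s) * b) ^ c) (Icc 0 1) :=
    ContinuousOn.cpow_const (by fun_prop) fun s hs ↦ hmem hs
  have hderiv {s : ℝ} (hs : s ∈ Ioo (0 : ℝ) 1) :
      HasDerivAt (fun s : ℝ ↦ ((s : ℂ) * a + (1 - s) * b) ^ (-((p + q : ℝ) : ℂ)))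
        (-((p + q : ℝ) : ℂ) * ((s : ℂ) * a + (1 - s) * b) ^ (-((p + q : ℝ) : ℂ) - 1) *
          (a - b)) s := by
    refine HasDerivAt.comp_ofReal (e := fun x ↦ (x * a + (1 - x) * b) ^ (-((p + q : ℝ) : ℂ)))
      (HasDerivAt.cpow_const ?_ (hmem (Ioo_subset_Icc_self hs)))
    refine (((hasDerivAt_id _).mul_const a).add
      (((hasDerivAt_id _).const_sub 1).mul_const b)).congr_deriv ?_
    ring
  rw [← integral_betaMeasure_stein hp hq (hcont _) (fun s ↦ hderiv)
    (((hcont _).const_mul _).mul_const _)]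
  refine integral_congr_ae ((betaMeasure_ae_mem_Ioo p q).mono fun s hs ↦ ?_)
  have hne := slitPlane_ne_zero (hmem (Ioo_subset_Icc_self hs))
  simp only [real_smul]
  rw [cpow_eq_cpow_sub_one_mul hne (-((p + q : ℝ) : ℂ))]
  push_cast
  ring

theorem hasDerivAt_integral_betaMeasure_cpow (hp : 0 < p) (hq : 0 < q) (ha : 0 < a.re)
    (hb : 0 < b.re) {r : ℝ} (hr : 0 ≤ r) :
    HasDerivAt (fun a : ℂ ↦ ∫ s : ℝ, ((s : ℂ) * a + (1 - s) * b) ^ (-(r : ℂ)) ∂betaMeasure p q)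
      (∫ s : ℝ, -(r : ℂ) * ((s : ℂ) * a + (1 - s) * b) ^ (-(r : ℂ) - 1) * s ∂betaMeasure p q)
      a := by
  have := isProbabilityMeasureBeta hp hq
  have hderiv {s : ℝ} (hs : s ∈ Ioo (0 : ℝ) 1) {a : ℂ} (ha : 0 < a.re) :
      HasDerivAt (fun a : ℂ ↦ ((s : ℂ) * a + (1 - s) * b) ^ (-(r : ℂ)))
        (-(r : ℂ) * ((s : ℂ) * a + (1 - s) * b) ^ (-(r : ℂ) - 1) * s) a := by
    refine HasDerivAt.cpow_const ?_ (convexComb_mem_slitPlane ha hb (Ioo_subset_Icc_self hs))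
    simpa using ((hasDerivAt_id a).const_mul (s : ℂ)).add_const ((1 - s) * b)
  have hδ : 0 < min (a.re / 2) b.re := lt_min (half_pos ha) hb
  refine (hasDerivAt_integral_of_norm_le (U := {a' | a.re / 2 < a'.re})
    (C := min (a.re / 2) b.re ^ (-r)) (isOpen_lt continuous_const continuous_re)
    (fun z ↦ Measurable.aestronglyMeasurable (by fun_prop)) ?_ ?_ (half_lt_self ha)).congr_deriv
    (integral_congr_ae ?_)
  · filter_upwards [betaMeasure_ae_mem_Ioo p q] with s hs a' ha'
    exact (hderiv hs ((half_pos ha).trans ha')).differentiableAt.differentiableWithinAt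
  · filter_upwards [betaMeasure_ae_mem_Ioo p q] with s hs a' ha'
    exact norm_cpow_neg_le_of_le_re hδ hr ((min_le_min_right _ ha'.le).trans
      (min_re_le_re_convexComb (Ioo_subset_Icc_self hs)))
  · filter_upwards [betaMeasure_ae_mem_Ioo p q] with s hs
    exact (hderiv hs ha).deriv

theorem mul_deriv_integral_betaMeasure_cpow (hp : 0 < p) (hq : 0 < q) (ha : 0 < a.re)
    (hb : 0 < b.re) :
    a * ∫ s : ℝ, -((p + q : ℝ) : ℂ) *
        ((s : ℂ) * a + (1 - s) * b) ^ (-((p + q : ℝ) : ℂ) - 1) * s ∂betaMeasure p q =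
      -p * ∫ s : ℝ, ((s : ℂ) * a + (1 - s) * b) ^ (-((p + q : ℝ) : ℂ)) ∂betaMeasure p q := by
  have hcont (c : ℂ) :
      ContinuousOn (fun s : ℝ ↦ ((s : ℂ) * a + (1 - s) * b) ^ c) (Icc 0 1) :=
    ContinuousOn.cpow_const (by fun_prop) fun s hs ↦ convexComb_mem_slitPlane ha hb hs
  rw [neg_mul, eq_neg_iff_add_eq_zero, ← integral_betaMeasure_cpow_ibp hp hq ha hb,
    ← integral_const_mul, ← integral_const_mul, ← integral_add]
  · refine integral_congr_ae ((betaMeasure_ae_mem_Ioo p q).mono fun s hs ↦ ?_)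
    have hne := slitPlane_ne_zero (convexComb_mem_slitPlane ha hb (Ioo_subset_Icc_self hs))
    simp only
    rw [cpow_eq_cpow_sub_one_mul hne (-((p + q : ℝ) : ℂ))]
    push_cast
    ring
  · exact integrable_betaMeasure_of_continuousOn hp hq
      ((((hcont _).const_mul _).mul continuous_ofReal.continuousOn).const_mul a)
  · exact integrable_betaMeasure_of_continuousOn hp hq ((hcont _).const_mul _)

/-- Feynman's parametrization. As a function of `a`, the left side `J` satisfies `a J' = -p J`. -/
theorem integral_betaMeasure_cpow (hp : 0 < p) (hq : 0 < q) (ha : 0 < a.re) (hb : 0 < b.re) :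
    ∫ s : ℝ, ((s : ℂ) * a + (1 - s) * b) ^ (-((p + q : ℝ) : ℂ)) ∂betaMeasure p q =
      a ^ (-(p : ℂ)) * b ^ (-(q : ℂ)) := by
  have := isProbabilityMeasureBeta hp hq
  have hne {x : ℂ} (hx : 0 < x.re) : x ≠ 0 := slitPlane_ne_zero (.inl hx)
  let J (x : ℂ) : ℂ := ∫ s : ℝ, ((s : ℂ) * x + (1 - s) * b) ^ (-((p + q : ℝ) : ℂ)) ∂betaMeasure p q
  have hderiv {x : ℂ} (hx : 0 < x.re) : HasDerivAt (fun x ↦ x ^ (p : ℂ) * J x) 0 x := by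
    refine (((hasDerivAt_id x).cpow_const (.inl hx)).mul
      (hasDerivAt_integral_betaMeasure_cpow hp hq hx hb (add_pos hp hq).le)).congr_deriv ?_
    have hode := mul_deriv_integral_betaMeasure_cpow hp hq hx hb
    simp only [id]
    rw [cpow_eq_cpow_sub_one_mul (hne hx) p]
    linear_combination (x ^ ((p : ℂ) - 1)) * hode
  have hconst : a ^ (p : ℂ) * J a = b ^ (p : ℂ) * J b :=
    (isOpen_lt continuous_const continuous_re).is_const_of_deriv_eq_zero
      (convex_halfSpace_re_gt 0).isPreconnected (f := fun x ↦ x ^ (p : ℂ) * J x)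
      (fun x hx ↦ (hderiv hx).differentiableAt.differentiableWithinAt)
      (fun x hx ↦ (hderiv hx).deriv) ha hb
  have hJb : J b = b ^ (-(p : ℂ)) * b ^ (-(q : ℂ)) := by
    have hb' (s : ℝ) : (s : ℂ) * b + (1 - s) * b = b := by ring
    simp only [J, hb', integral_const, probReal_univ, one_smul, ← cpow_add _ _ (hne hb)]
    congr 1
    push_cast
    ring
  have hap : a ^ (p : ℂ) ≠ 0 := by simp [cpow_eq_zero_iff, hne ha]
  have hbp : b ^ (p : ℂ) ≠ 0 := by simp [cpow_eq_zero_iff, hne hb]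
  rw [hJb, cpow_neg b p, mul_inv_cancel_left₀ hbp] at hconst
  rw [cpow_neg a p, ← hconst, inv_mul_cancel_left₀ hap]

end FeynmanIdentity

/-- `g` is a fractional Cauchy transform of order `r` of a probability measure on the unit circle:
`g z = ∫ (1 - ζ z)^(-r) dν(ζ)` on the unit disc. The values of `g` off the disc are irrelevant, and
the kernel is `1 - ζ z` rather than the more usual `1 - ζ⁻¹ z`. -/
def IsFractionalCauchyTransform (r : ℝ) (g : ℂ → ℂ) : Prop :=
  ∃ ν : ProbabilityMeasure (sphere (0 : ℂ) 1), ∀ z ∈ ball (0 : ℂ) 1,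
    g z = ∫ ζ : sphere (0 : ℂ) 1, (1 - (ζ : ℂ) * z) ^ (-(r : ℂ)) ∂(ν : Measure (sphere (0 : ℂ) 1))

section Kernel

variable {w z : ℂ}

theorem one_sub_norm_le_re_one_sub_mul (hw : ‖w‖ ≤ 1) : 1 - ‖z‖ ≤ (1 - w * z).re := by
  have h : (w * z).re ≤ ‖z‖ := calc
    (w * z).re ≤ ‖w * z‖ := re_le_norm _
    _ = ‖w‖ * ‖z‖ := norm_mul w z
    _ ≤ ‖z‖ := mul_le_of_le_one_left (norm_nonneg z) hw
  rw [sub_re, one_re]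
  gcongr

theorem one_sub_mul_mem_slitPlane (hw : ‖w‖ ≤ 1) (hz : ‖z‖ < 1) : 1 - w * z ∈ slitPlane :=
  .inl ((sub_pos.2 hz).trans_le (one_sub_norm_le_re_one_sub_mul hw))

theorem norm_one_sub_mul_cpow_neg_le (hw : ‖w‖ ≤ 1) (hz : ‖z‖ < 1) {r : ℝ} (hr : 0 ≤ r) :
    ‖(1 - w * z) ^ (-(r : ℂ))‖ ≤ (1 - ‖z‖) ^ (-r) :=
  norm_cpow_neg_le_of_le_re (sub_pos.2 hz) hr (one_sub_norm_le_re_one_sub_mul hw)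

theorem norm_log_one_sub_mul_le (hw : ‖w‖ ≤ 1) (hz : ‖z‖ < 1) :
    ‖log (1 - w * z)‖ ≤ ‖z‖ ^ 2 * (1 - ‖z‖)⁻¹ / 2 + ‖z‖ := by
  have hwz : ‖-(w * z)‖ ≤ ‖z‖ := by
    rw [norm_neg, norm_mul]
    exact mul_le_of_le_one_left (norm_nonneg z) hw
  calc ‖log (1 - w * z)‖ = ‖log (1 + -(w * z))‖ := by rw [sub_eq_add_neg]
    _ ≤ ‖-(w * z)‖ ^ 2 * (1 - ‖-(w * z)‖)⁻¹ / 2 + ‖-(w * z)‖ :=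
      norm_log_one_add_le (hwz.trans_lt hz)
    _ ≤ ‖z‖ ^ 2 * (1 - ‖z‖)⁻¹ / 2 + ‖z‖ := by
      have : 0 < 1 - ‖z‖ := sub_pos.2 hz
      have : 0 ≤ (1 - ‖-(w * z)‖)⁻¹ := inv_nonneg.2 (sub_nonneg.2 (hwz.trans hz.le))
      gcongr

end Kernel

section KernelIntegral

variable {Ω : Type*} [MeasurableSpace Ω] {P : Measure Ω} {w : Ω → ℂ} {z : ℂ}

theorem integrable_one_sub_mul_cpow_neg [IsFiniteMeasure P] (hw : AEMeasurable w P)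
    (hw_norm : ∀ᵐ ω ∂P, ‖w ω‖ ≤ 1) (hz : z ∈ ball (0 : ℂ) 1) {r : ℝ} (hr : 0 ≤ r) :
    Integrable (fun ω ↦ (1 - w ω * z) ^ (-(r : ℂ))) P :=
  .of_bound (AEMeasurable.aestronglyMeasurable (by fun_prop)) ((1 - ‖z‖) ^ (-r)) <|
    hw_norm.mono fun _ h ↦ norm_one_sub_mul_cpow_neg_le h (mem_ball_zero_iff.1 hz) hr

theorem hasDerivAt_integral_neg_log_one_sub_mul [IsFiniteMeasure P] (hw : AEMeasurable w P)
    (hw_norm : ∀ᵐ ω ∂P, ‖w ω‖ ≤ 1) (hz : z ∈ ball (0 : ℂ) 1) :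
    HasDerivAt (fun z ↦ ∫ ω, -log (1 - w ω * z) ∂P) (∫ ω, w ω / (1 - w ω * z) ∂P) z := by
  obtain ⟨ρ, hzρ, hρ⟩ := exists_between (mem_ball_zero_iff.1 hz)
  have hderiv {w z : ℂ} (hw : ‖w‖ ≤ 1) (hz : ‖z‖ < 1) :
      HasDerivAt (fun z ↦ -log (1 - w * z)) (w / (1 - w * z)) z := by
    refine (((hasDerivAt_id z).const_mul w).const_sub 1).clog
      (one_sub_mul_mem_slitPlane hw hz) |>.neg.congr_deriv ?_
    simp [neg_div]
  refine (hasDerivAt_integral_of_norm_le (U := ball 0 ρ)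
    (C := ρ ^ 2 * (1 - ρ)⁻¹ / 2 + ρ) isOpen_ball
    (fun z ↦ AEMeasurable.aestronglyMeasurable (by fun_prop)) ?_ ?_
    (mem_ball_zero_iff.2 hzρ)).congr_deriv (integral_congr_ae ?_)
  · filter_upwards [hw_norm] with ω hω x hx
    exact (hderiv hω ((mem_ball_zero_iff.1 hx).trans hρ)).differentiableAt.differentiableWithinAt
  · filter_upwards [hw_norm] with ω hω x hx
    have hxρ : ‖x‖ < ρ := mem_ball_zero_iff.1 hx
    have : 0 < 1 - ρ := sub_pos.2 hρ
    have : 0 ≤ (1 - ‖x‖)⁻¹ := inv_nonneg.2 (sub_nonneg.2 (hxρ.trans hρ).le)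
    rw [norm_neg]
    exact (norm_log_one_sub_mul_le hω (hxρ.trans hρ)).trans (by gcongr)
  · filter_upwards [hw_norm] with ω hω
    exact (hderiv hω (mem_ball_zero_iff.1 hz)).deriv

theorem tendsto_integral_exp_div_pow [IsProbabilityMeasure P] {l : Ω → ℂ} {M : ℝ}
    (hl : AEMeasurable l P) (hl_norm : ∀ᵐ ω ∂P, ‖l ω‖ ≤ M) :
    Tendsto (fun n : ℕ ↦ (∫ ω, cexp ((n : ℂ)⁻¹ * l ω) ∂P) ^ n) atTop
      (𝓝 (cexp (∫ ω, l ω ∂P))) := by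
  have hderiv : HasDerivAt (fun t ↦ ∫ ω, cexp (t * l ω) ∂P) (∫ ω, l ω ∂P) 0 := by
    refine (hasDerivAt_integral_of_norm_le (U := ball 0 1) (C := Real.exp M) isOpen_ball
      (fun z ↦ AEMeasurable.aestronglyMeasurable (by fun_prop)) (.of_forall fun ω ↦ by fun_prop) ?_
      (mem_ball_self one_pos)).congr_deriv (integral_congr_ae (.of_forall fun ω ↦ ?_))
    · filter_upwards [hl_norm] with ω hω t ht
      have htl : ‖t * l ω‖ ≤ M := by
        rw [norm_mul]
        exact (mul_le_of_le_one_left (norm_nonneg _) (mem_ball_zero_iff.1 ht).le).trans hω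
      rw [norm_exp]
      exact Real.exp_le_exp.2 ((re_le_norm _).trans htl)
    · simp
  have hinv : Tendsto (fun n : ℕ ↦ (n : ℂ)⁻¹) atTop (𝓝[≠] 0) :=
    tendsto_nhdsWithin_iff.2 ⟨tendsto_inv_atTop_nhds_zero_nat (𝕜 := ℂ),
      (eventually_ne_atTop 0).mono fun n hn ↦ inv_ne_zero (Nat.cast_ne_zero.2 hn)⟩
  have hslope := hderiv.tendsto_slope.comp hinv
  refine (tendsto_one_add_pow_exp_of_tendsto
    (g := fun n : ℕ ↦ ∫ ω, cexp ((n : ℂ)⁻¹ * l ω) ∂P - 1) ?_).congr fun n ↦ by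
      rw [add_sub_cancel]
  refine hslope.congr fun n ↦ ?_
  simp [slope_def_field, div_eq_mul_inv, mul_comm]

theorem half_le_re_one_sub_inv {u : ℂ} (hu : ‖u‖ < 1) : 1 / 2 ≤ ((1 - u)⁻¹).re := by
  have hpos : 0 < normSq (1 - u) :=
    normSq_pos.2 (sub_ne_zero.2 fun h ↦ by simp [← h] at hu)
  have hsq : u.re * u.re + u.im * u.im < 1 := by
    rw [← normSq_apply, normSq_eq_norm_sq]
    exact pow_lt_one₀ (norm_nonneg u) hu two_ne_zero
  rw [inv_re, div_le_div_iff₀ two_pos hpos, normSq_apply, sub_re, sub_im, one_re, one_im]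
  linarith

theorem integrable_one_sub_mul_inv [IsFiniteMeasure P] (hw : AEMeasurable w P)
    (hw_norm : ∀ᵐ ω ∂P, ‖w ω‖ ≤ 1) (hz : z ∈ ball (0 : ℂ) 1) :
    Integrable (fun ω ↦ (1 - w ω * z)⁻¹) P := by
  simpa only [ofReal_one, cpow_neg_one] using
    integrable_one_sub_mul_cpow_neg hw hw_norm hz zero_le_one

theorem half_le_re_integral_one_sub_mul_inv [IsProbabilityMeasure P] (hw : AEMeasurable w P)
    (hw_norm : ∀ᵐ ω ∂P, ‖w ω‖ ≤ 1) (hz : z ∈ ball (0 : ℂ) 1) :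
    1 / 2 ≤ (∫ ω, (1 - w ω * z)⁻¹ ∂P).re := by
  have hint := integrable_one_sub_mul_inv hw hw_norm hz
  calc (1 / 2 : ℝ) = ∫ _, 1 / 2 ∂P := by simp
    _ ≤ ∫ ω, ((1 - w ω * z)⁻¹).re ∂P := by
      refine integral_mono_ae (integrable_const _) hint.re (hw_norm.mono fun ω hω ↦ ?_)
      refine half_le_re_one_sub_inv ?_
      rw [norm_mul]
      exact (mul_le_of_le_one_left (norm_nonneg z) hω).trans_lt (mem_ball_zero_iff.1 hz)
    _ = (∫ ω, (1 - w ω * z)⁻¹ ∂P).re := integral_re hint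

theorem integral_one_sub_mul_inv [IsProbabilityMeasure P] (hw : AEMeasurable w P)
    (hw_norm : ∀ᵐ ω ∂P, ‖w ω‖ ≤ 1) (hz : z ∈ ball (0 : ℂ) 1) :
    ∫ ω, (1 - w ω * z)⁻¹ ∂P = 1 + z * ∫ ω, w ω / (1 - w ω * z) ∂P := by
  rw [← sub_eq_iff_eq_add', ← integral_const_mul]
  calc ∫ ω, (1 - w ω * z)⁻¹ ∂P - 1 = ∫ ω, ((1 - w ω * z)⁻¹ - 1) ∂P := by
        rw [integral_sub (integrable_one_sub_mul_inv hw hw_norm hz) (integrable_const 1)]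
        simp
    _ = ∫ ω, z * (w ω / (1 - w ω * z)) ∂P := by
        refine integral_congr_ae (hw_norm.mono fun ω hω ↦ ?_)
        have := slitPlane_ne_zero (one_sub_mul_mem_slitPlane hω (mem_ball_zero_iff.1 hz))
        field_simp
        ring

theorem differentiableOn_integral_one_sub_mul_inv [IsProbabilityMeasure P] (hw : AEMeasurable w P)
    (hw_norm : ∀ᵐ ω ∂P, ‖w ω‖ ≤ 1) :
    DifferentiableOn ℂ (fun z ↦ ∫ ω, (1 - w ω * z)⁻¹ ∂P) (ball 0 1) := by
  have hK : DifferentiableOn ℂ (fun z ↦ ∫ ω, -log (1 - w ω * z) ∂P) (ball 0 1) := fun z hz ↦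
    (hasDerivAt_integral_neg_log_one_sub_mul hw hw_norm hz).differentiableAt.differentiableWithinAt
  refine ((differentiableOn_id.mul (hK.deriv isOpen_ball)).const_add 1).congr fun z hz ↦ ?_
  rw [integral_one_sub_mul_inv hw hw_norm hz, Pi.mul_apply, id,
    (hasDerivAt_integral_neg_log_one_sub_mul hw hw_norm hz).deriv]

end KernelIntegral

theorem continuous_one_sub_mul_cpow {z : ℂ} (hz : z ∈ ball (0 : ℂ) 1) (c : ℂ) :
    Continuous fun ζ : sphere (0 : ℂ) 1 ↦ (1 - (ζ : ℂ) * z) ^ c :=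
  Continuous.cpow (by fun_prop) continuous_const fun ζ ↦
    one_sub_mul_mem_slitPlane (mem_sphere_zero_iff_norm.1 ζ.2).le (mem_ball_zero_iff.1 hz)

theorem IsFractionalCauchyTransform.of_tendsto {κ : Type*} {l : Filter κ} [l.NeBot] {r : ℝ}
    {G : κ → ℂ → ℂ} {g : ℂ → ℂ} (hG : ∀ᶠ n in l, IsFractionalCauchyTransform r (G n))
    (h : ∀ z ∈ ball (0 : ℂ) 1, Tendsto (fun n ↦ G n z) l (𝓝 (g z))) :
    IsFractionalCauchyTransform r g := by
  obtain ⟨μ, hμ⟩ := hG.choice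
  obtain ⟨ν, hν⟩ := exists_probabilityMeasure_integral_eq_of_tendsto (l := l) (μ := μ)
    (k := fun (z : ball (0 : ℂ) 1) (ζ : sphere (0 : ℂ) 1) ↦
      (1 - (ζ : ℂ) * (z : ℂ)) ^ (-(r : ℂ)))
    (fun z ↦ continuous_one_sub_mul_cpow z.2 _)
    (fun z ↦ (h z z.2).congr' (hμ.mono fun n hn ↦ hn z z.2))
  exact ⟨ν, fun z hz ↦ hν ⟨z, hz⟩⟩

theorem exists_probabilityMeasure_sphere_integral_eq_circleAverage {u : ℂ → ℝ}
    (hu : ContinuousOn u (sphere 0 1)) (hu_nonneg : ∀ ζ ∈ sphere (0 : ℂ) 1, 0 ≤ u ζ)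
    (hu_avg : circleAverage u 0 1 = 1) :
    ∃ ν : ProbabilityMeasure (sphere (0 : ℂ) 1), ∀ φ : ℂ → ℂ, ContinuousOn φ (sphere 0 1) →
      ∫ ζ : sphere (0 : ℂ) 1, φ ζ ∂(ν : Measure (sphere (0 : ℂ) 1)) =
        circleAverage (fun ζ ↦ u ζ • φ ζ) 0 1 := by
  let c (θ : ℝ) : sphere (0 : ℂ) 1 := ⟨circleMap 0 1 θ, circleMap_mem_sphere 0 zero_le_one θ⟩
  have hc : Continuous c := by fun_prop
  let d (θ : ℝ) : ℝ := (2 * π)⁻¹ * u (c θ)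
  have hd : Continuous d := (hu.comp_continuous (by fun_prop) fun θ ↦ (c θ).2).const_mul _
  have hd_nonneg (θ : ℝ) : 0 ≤ d θ := mul_nonneg (by positivity) (hu_nonneg _ (c θ).2)
  let m : Measure ℝ :=
    (volume.restrict (Ioc 0 (2 * π))).withDensity fun θ ↦ ENNReal.ofReal (d θ)
  have hm (ψ : ℝ → ℂ) : ∫ θ, ψ θ ∂m = (2 * π)⁻¹ • ∫ θ in (0)..2 * π, u (c θ) • ψ θ := by
    rw [integral_withDensity_eq_integral_toReal_smul hd.measurable.ennreal_ofReal
        (.of_forall fun _ ↦ ENNReal.ofReal_lt_top),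
      intervalIntegral.integral_of_le two_pi_pos.le, ← integral_smul]
    simp only [ENNReal.toReal_ofReal (hd_nonneg _), d, mul_smul]
  have hm_prob : IsProbabilityMeasure m := by
    rw [isProbabilityMeasure_iff_real, ← ofReal_inj, ofReal_one, ← ofReal_one, ← hu_avg]
    calc (m.real univ : ℂ) = ∫ _, (1 : ℂ) ∂m := by simp
      _ = (2 * π)⁻¹ • ∫ θ in (0)..2 * π, (u (c θ) : ℂ) := by simp [hm]
      _ = circleAverage u 0 1 := by
        rw [intervalIntegral.integral_ofReal, circleAverage, smul_eq_mul, ofReal_mul, real_smul]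
  have := Measure.isProbabilityMeasure_map (μ := m) hc.aemeasurable
  refine ⟨⟨m.map c, this⟩, fun φ hφ ↦ ?_⟩
  have hφ' : Continuous fun ζ : sphere (0 : ℂ) 1 ↦ φ ζ :=
    continuousOn_iff_continuous_domRestrict.1 hφ
  rw [ProbabilityMeasure.coe_mk,
    integral_map hc.aemeasurable hφ'.aestronglyMeasurable, hm, circleAverage]

section Herglotz

open scoped ComplexConjugate

theorem one_sub_inv_mul_inv {ζ : ℂ} (hζ : ζ ≠ 0) (z : ℂ) : (1 - ζ⁻¹ * z)⁻¹ = ζ / (ζ - z) := by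
  rw [← div_eq_inv_mul, ← div_self hζ, ← sub_div, inv_div]

theorem circleAverage_div_sub_mul_conj {p : ℂ → ℂ} (hp : DiffContOnCl ℂ p (ball 0 1)) {z : ℂ}
    (hz : z ∈ ball (0 : ℂ) 1) :
    circleAverage (fun ζ ↦ ζ / (ζ - z) * conj (p ζ)) 0 1 = conj (p 0) := by
  let F (ζ : ℂ) : ℂ := (1 - ζ * conj z)⁻¹ • p ζ
  have hne (ζ) (hζ : ζ ∈ closedBall (0 : ℂ) 1) : 1 - ζ * conj z ≠ 0 :=
    slitPlane_ne_zero <| one_sub_mul_mem_slitPlane (mem_closedBall_zero_iff.1 hζ)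
      ((norm_conj z).trans_lt (mem_ball_zero_iff.1 hz))
  have hF : DiffContOnCl ℂ F (ball 0 1) := by
    refine DiffContOnCl.smul (DifferentiableOn.diffContOnCl ?_) hp
    rw [closure_ball _ one_ne_zero]
    exact DifferentiableOn.inv (by fun_prop) hne
  have hF_int : CircleIntegrable F 0 1 :=
    (hF.continuousOn_ball.mono sphere_subset_closedBall).circleIntegrable zero_le_one
  -- On the circle `ζ / (ζ - z)` is the conjugate of `(1 - ζ * conj z)⁻¹`, which is holomorphic in
  -- `ζ`, so the mean value property applies.
  calc circleAverage (fun ζ ↦ ζ / (ζ - z) * conj (p ζ)) 0 1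
      = circleAverage ((conjCLE : ℂ →L[ℝ] ℂ) ∘ F) 0 1 := by
        refine circleAverage_congr_sphere fun ζ hζ ↦ ?_
        rw [abs_one, mem_sphere_zero_iff_norm] at hζ
        have hζ0 : ζ ≠ 0 := norm_ne_zero_iff.1 (by simp [hζ])
        have hconj : conj ζ = ζ⁻¹ := (inv_eq_conj hζ).symm
        simp only [Function.comp_apply, F, ContinuousLinearEquiv.coe_coe, conjCLE_apply,
          smul_eq_mul, map_mul, map_inv₀, map_sub, map_one, conj_conj, hconj,
          one_sub_inv_mul_inv hζ0]
    _ = conj (p 0) := by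
        rw [ContinuousLinearMap.circleAverage_comp_comm _ hF_int,
          DiffContOnCl.circleAverage (by rwa [abs_one])]
        simp [F]

theorem circleAverage_re_smul_div_sub {p : ℂ → ℂ} (hp : DiffContOnCl ℂ p (ball 0 1)) {z : ℂ}
    (hz : z ∈ ball (0 : ℂ) 1) :
    circleAverage (fun ζ ↦ (p ζ).re • (ζ / (ζ - z))) 0 1 = (p z + conj (p 0)) / 2 := by
  have hp_cont : ContinuousOn p (sphere 0 1) := hp.continuousOn_ball.mono sphere_subset_closedBall
  have hdiv_cont : ContinuousOn (fun ζ ↦ ζ / (ζ - z)) (sphere 0 1) := by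
    refine ContinuousOn.div (by fun_prop) (by fun_prop) fun ζ hζ ↦ sub_ne_zero.2 ?_
    rintro rfl
    exact (mem_ball_zero_iff.1 hz).ne (mem_sphere_zero_iff_norm.1 hζ)
  have hp_int : CircleIntegrable (fun ζ ↦ ζ / (ζ - z) * p ζ) 0 1 :=
    (hdiv_cont.mul hp_cont).circleIntegrable zero_le_one
  have hp_conj_int : CircleIntegrable (fun ζ ↦ ζ / (ζ - z) * conj (p ζ)) 0 1 :=
    (hdiv_cont.mul (continuous_conj.comp_continuousOn hp_cont)).circleIntegrable zero_le_one
  have cauchy : circleAverage (fun ζ ↦ ζ / (ζ - z) * p ζ) 0 1 = p z := by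
    rw [← abs_one] at hp hz
    simpa only [sub_zero, smul_eq_mul] using hp.circleAverage_smul_div hz
  rw [← circleAverage_div_sub_mul_conj hp hz, ← cauchy, ← circleAverage_fun_add hp_int hp_conj_int,
    div_eq_inv_mul, ← smul_eq_mul, ← circleAverage_fun_smul]
  congr 1 with ζ
  rw [real_smul, re_eq_add_conj, smul_eq_mul]
  ring

theorem isFractionalCauchyTransform_one_of_diffContOnCl {p : ℂ → ℂ}
    (hp : DiffContOnCl ℂ p (ball 0 1)) (hp_zero : p 0 = 1)
    (hp_re : ∀ ζ ∈ sphere (0 : ℂ) 1, 0 ≤ (p ζ).re) :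
    IsFractionalCauchyTransform 1 fun z ↦ (p z + 1) / 2 := by
  have hp_cont : ContinuousOn p (sphere 0 1) := hp.continuousOn_ball.mono sphere_subset_closedBall
  let u (ζ : ℂ) : ℝ := (p ζ⁻¹).re
  have hinv {ζ : ℂ} (hζ : ζ ∈ sphere (0 : ℂ) 1) : ζ⁻¹ ∈ sphere (0 : ℂ) 1 := by simpa using hζ
  have hu : ContinuousOn u (sphere 0 1) :=
    continuous_re.comp_continuousOn <| hp_cont.comp
      (continuousOn_id.inv₀ fun ζ hζ ↦ ne_of_mem_sphere hζ one_ne_zero) fun ζ ↦ hinv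
  have hu_avg : circleAverage u 0 1 = 1 := calc
    circleAverage u 0 1 = circleAverage (reCLM ∘ p) 0 1 :=
      circleAverage_zero_one_congr_inv (f := reCLM ∘ p)
    _ = 1 := by
      rw [ContinuousLinearMap.circleAverage_comp_comm _ (hp_cont.circleIntegrable zero_le_one),
        DiffContOnCl.circleAverage (by rwa [abs_one]), hp_zero, reCLM_apply, one_re]
  obtain ⟨ν, hν⟩ := exists_probabilityMeasure_sphere_integral_eq_circleAverage hu
    (fun ζ hζ ↦ hp_re _ (hinv hζ)) hu_avg
  refine ⟨ν, fun z hz ↦ ?_⟩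
  rw [hν (fun ζ ↦ (1 - ζ * z) ^ (-((1 : ℝ) : ℂ)))
    (continuousOn_iff_continuous_domRestrict.2 (continuous_one_sub_mul_cpow hz _))]
  calc (p z + 1) / 2 = circleAverage (fun ζ ↦ (p ζ).re • (ζ / (ζ - z))) 0 1 := by
        rw [circleAverage_re_smul_div_sub hp hz, hp_zero, map_one]
    _ = circleAverage (fun ζ ↦ u ζ⁻¹ • (1 - ζ⁻¹ * z) ^ (-((1 : ℝ) : ℂ))) 0 1 := by
        refine circleAverage_congr_sphere fun ζ hζ ↦ ?_
        simp only [u, inv_inv, ofReal_one, cpow_neg_one,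
          one_sub_inv_mul_inv (ne_of_mem_sphere hζ (by simp))]
    _ = circleAverage (fun ζ ↦ u ζ • (1 - ζ * z) ^ (-((1 : ℝ) : ℂ))) 0 1 :=
        circleAverage_zero_one_congr_inv (f := fun ζ ↦ u ζ • (1 - ζ * z) ^ (-((1 : ℝ) : ℂ)))

theorem isFractionalCauchyTransform_one_of_half_le_re {q : ℂ → ℂ}
    (hq : DifferentiableOn ℂ q (ball 0 1)) (hq_zero : q 0 = 1)
    (hq_re : ∀ z ∈ ball (0 : ℂ) 1, 1 / 2 ≤ (q z).re) : IsFractionalCauchyTransform 1 q := by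
  have hdilation {ρ : ℝ} (hρ : ρ ∈ Ioo 0 1) {z : ℂ} (hz : z ∈ closedBall (0 : ℂ) 1) :
      (ρ : ℂ) * z ∈ ball (0 : ℂ) 1 := by
    rw [mem_ball_zero_iff, norm_mul, norm_real, norm_of_nonneg hρ.1.le]
    exact mul_lt_one_of_nonneg_of_lt_one_left hρ.1.le hρ.2 (mem_closedBall_zero_iff.1 hz)
  refine .of_tendsto (l := 𝓝[<] (1 : ℝ)) (G := fun ρ z ↦ q (ρ * z)) ?_ fun z hz ↦ ?_
  · filter_upwards [Ioo_mem_nhdsLT one_pos] with ρ hρ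
    have hp : DiffContOnCl ℂ (fun z ↦ 2 * q (ρ * z) - 1) (ball 0 1) := by
      refine DifferentiableOn.diffContOnCl ?_
      rw [closure_ball _ one_ne_zero]
      exact ((hq.comp (by fun_prop) fun z ↦ hdilation hρ).const_mul 2).sub_const 1
    have hp_zero : 2 * q (ρ * 0) - 1 = 1 := by rw [mul_zero, hq_zero]; norm_num
    have hp_re (ζ) (hζ : ζ ∈ sphere (0 : ℂ) 1) : 0 ≤ (2 * q (ρ * ζ) - 1).re := by
      have := hq_re _ (hdilation hρ (sphere_subset_closedBall hζ))
      simp only [sub_re, mul_re, re_ofNat, im_ofNat, zero_mul, sub_zero, one_re]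
      linarith
    simpa using isFractionalCauchyTransform_one_of_diffContOnCl hp hp_zero hp_re
  · have hcont : ContinuousAt q z := (hq.differentiableAt (isOpen_ball.mem_nhds hz)).continuousAt
    have hlim : Tendsto (fun ρ : ℝ ↦ (ρ : ℂ) * z) (𝓝[<] 1) (𝓝 z) := by
      have : ContinuousAt (fun ρ : ℝ ↦ (ρ : ℂ) * z) 1 := by fun_prop
      simpa using this.tendsto.mono_left nhdsWithin_le_nhds
    exact hcont.tendsto.comp hlim

end Herglotz

section Balayage

variable {Ω : Type*} [MeasurableSpace Ω] {P : Measure Ω} {w : Ω → ℂ}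

theorem norm_one_sub_mul_inv_le {w z : ℂ} (hw : ‖w‖ ≤ 1) (hz : ‖z‖ < 1) :
    ‖(1 - w * z)⁻¹‖ ≤ (1 - ‖z‖)⁻¹ := by
  simpa only [ofReal_one, cpow_neg_one, rpow_neg_one] using
    norm_one_sub_mul_cpow_neg_le hw hz zero_le_one

theorem circleAverage_one_sub_mul_inv_mul {Φ : ℂ → ℂ} (hΦ : DiffContOnCl ℂ Φ (ball 0 1)) {z : ℂ}
    (hz : z ∈ ball (0 : ℂ) 1) :
    circleAverage (fun ξ ↦ (1 - ξ⁻¹ * z)⁻¹ * Φ ξ) 0 1 = Φ z := by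
  rw [← abs_one] at hΦ hz
  rw [← hΦ.circleAverage_smul_div hz]
  refine circleAverage_congr_sphere fun ξ hξ ↦ ?_
  simp only [sub_zero, smul_eq_mul, one_sub_inv_mul_inv (ne_of_mem_sphere hξ (by simp))]

theorem integral_circleAverage_comm [IsFiniteMeasure P] {F : ℂ → Ω → ℂ} {C : ℝ}
    (hF : AEStronglyMeasurable (fun x : ℝ × Ω ↦ F (circleMap 0 1 x.1) x.2)
      ((volume.restrict (Ioc 0 (2 * π))).prod P))
    (hbound : ∀ᵐ ω ∂P, ∀ ξ ∈ sphere (0 : ℂ) 1, ‖F ξ ω‖ ≤ C) :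
    ∫ ω, circleAverage (F · ω) 0 1 ∂P = circleAverage (fun ξ ↦ ∫ ω, F ξ ω ∂P) 0 1 := by
  have hint : Integrable (Function.uncurry fun θ ω ↦ F (circleMap 0 1 θ) ω)
      ((volume.restrict (uIoc 0 (2 * π))).prod P) := by
    rw [uIoc_of_le two_pi_pos.le]
    refine .of_bound hF C ?_
    filter_upwards [Measure.quasiMeasurePreserving_snd.ae hbound] with x hx
    exact hx _ (circleMap_mem_sphere 0 zero_le_one _)
  simp only [circleAverage]
  rw [intervalIntegral_integral_swap hint, integral_smul]

theorem integral_comp_mul_eq_circleAverage [IsFiniteMeasure P] (hw : AEMeasurable w P)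
    (hw_norm : ∀ᵐ ω ∂P, ‖w ω‖ ≤ 1) {Φ : ℂ → ℂ} (hΦ : DiffContOnCl ℂ Φ (ball 0 1)) {ρ : ℂ}
    (hρ : ‖ρ‖ < 1) :
    ∫ ω, Φ (w ω * ρ) ∂P =
      circleAverage (fun ξ ↦ (∫ ω, (1 - w ω * (ξ⁻¹ * ρ))⁻¹ ∂P) * Φ ξ) 0 1 := by
  have hΦ_sphere : ContinuousOn Φ (sphere 0 1) :=
    hΦ.continuousOn_ball.mono sphere_subset_closedBall
  obtain ⟨C, hC⟩ := (isCompact_sphere (0 : ℂ) 1).exists_bound_of_continuousOn hΦ_sphere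
  have hmeas : AEStronglyMeasurable
      (fun x : ℝ × Ω ↦ (1 - w x.2 * ((circleMap 0 1 x.1)⁻¹ * ρ))⁻¹ * Φ (circleMap 0 1 x.1))
      ((volume.restrict (Ioc 0 (2 * π))).prod P) := by
    have hΦc : Measurable fun θ ↦ Φ (circleMap 0 1 θ) := (hΦ_sphere.comp_continuous (by fun_prop)
      fun θ ↦ circleMap_mem_sphere 0 zero_le_one θ).measurable
    have hc : Measurable fun x : ℝ × Ω ↦ (circleMap 0 1 x.1)⁻¹ * ρ :=
      .mul_const (.inv (by fun_prop)) ρ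
    exact (((hw.comp_snd.mul hc.aemeasurable).const_sub 1).inv.mul
      (hΦc.comp measurable_fst).aemeasurable).aestronglyMeasurable
  calc ∫ ω, Φ (w ω * ρ) ∂P
      = ∫ ω, circleAverage (fun ξ ↦ (1 - w ω * (ξ⁻¹ * ρ))⁻¹ * Φ ξ) 0 1 ∂P := by
        refine integral_congr_ae (hw_norm.mono fun ω hω ↦ ?_)
        have hωρ : w ω * ρ ∈ ball (0 : ℂ) 1 := by
          rw [mem_ball_zero_iff, norm_mul]
          exact (mul_le_of_le_one_left (norm_nonneg ρ) hω).trans_lt hρ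
        simp only [mul_left_comm (w ω), circleAverage_one_sub_mul_inv_mul hΦ hωρ]
    _ = circleAverage (fun ξ ↦ ∫ ω, (1 - w ω * (ξ⁻¹ * ρ))⁻¹ * Φ ξ ∂P) 0 1 := by
        refine integral_circleAverage_comm (C := (1 - ‖ρ‖)⁻¹ * C) hmeas ?_
        filter_upwards [hw_norm] with ω hω ξ hξ
        have hξρ : ‖ξ⁻¹ * ρ‖ = ‖ρ‖ := by
          rw [norm_mul, norm_inv, mem_sphere_zero_iff_norm.1 hξ, inv_one, one_mul]
        rw [norm_mul, ← hξρ]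
        exact mul_le_mul (norm_one_sub_mul_inv_le hω (hξρ.trans_lt hρ)) (hC ξ hξ) (norm_nonneg _)
          (inv_nonneg.2 (sub_nonneg.2 (hξρ.trans_lt hρ).le))
    _ = circleAverage (fun ξ ↦ (∫ ω, (1 - w ω * (ξ⁻¹ * ρ))⁻¹ ∂P) * Φ ξ) 0 1 := by
        simp only [integral_mul_const]

/-- Balayage of the law of `w` to the circle: `ν` is the measure with the same Cauchy transform. -/
theorem exists_probabilityMeasure_sphere_integral_comp_mul_eq [IsProbabilityMeasure P]
    (hw : AEMeasurable w P) (hw_norm : ∀ᵐ ω ∂P, ‖w ω‖ ≤ 1) :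
    ∃ ν : ProbabilityMeasure (sphere (0 : ℂ) 1), ∀ Φ : ℂ → ℂ, DiffContOnCl ℂ Φ (ball 0 1) →
      ∀ ρ : ℂ, ‖ρ‖ < 1 → ∫ ω, Φ (w ω * ρ) ∂P =
        ∫ ζ : sphere (0 : ℂ) 1, Φ (ζ * ρ) ∂(ν : Measure (sphere (0 : ℂ) 1)) := by
  obtain ⟨ν, hν⟩ := isFractionalCauchyTransform_one_of_half_le_re
    (differentiableOn_integral_one_sub_mul_inv hw hw_norm) (by simp)
    fun z hz ↦ half_le_re_integral_one_sub_mul_inv hw hw_norm hz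
  simp only [ofReal_one, cpow_neg_one] at hν
  refine ⟨ν, fun Φ hΦ ρ hρ ↦ ?_⟩
  rw [integral_comp_mul_eq_circleAverage hw hw_norm hΦ hρ, integral_comp_mul_eq_circleAverage
    (by fun_prop) (.of_forall fun ζ ↦ (mem_sphere_zero_iff_norm.1 ζ.2).le) hΦ hρ]
  refine circleAverage_congr_sphere fun ξ hξ ↦ ?_
  have hξρ : ξ⁻¹ * ρ ∈ ball (0 : ℂ) 1 := by
    rw [abs_one, mem_sphere_zero_iff_norm] at hξ
    rwa [mem_ball_zero_iff, norm_mul, norm_inv, hξ, inv_one, one_mul]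
  simp only [hν _ hξρ]

theorem isFractionalCauchyTransform_integral [IsProbabilityMeasure P] (hw : AEMeasurable w P)
    (hw_norm : ∀ᵐ ω ∂P, ‖w ω‖ ≤ 1) (r : ℝ) :
    IsFractionalCauchyTransform r fun z ↦ ∫ ω, (1 - w ω * z) ^ (-(r : ℂ)) ∂P := by
  obtain ⟨ν, hν⟩ := exists_probabilityMeasure_sphere_integral_comp_mul_eq hw hw_norm
  refine ⟨ν, fun z hz ↦ ?_⟩
  obtain ⟨ρ, hzρ, hρ⟩ := exists_between (mem_ball_zero_iff.1 hz)
  have hρ0 : 0 < ρ := (norm_nonneg z).trans_lt hzρ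
  have hΦ : DiffContOnCl ℂ (fun ξ ↦ (1 - ξ * (z / ρ)) ^ (-(r : ℂ))) (ball 0 1) := by
    refine DifferentiableOn.diffContOnCl ?_
    rw [closure_ball _ one_ne_zero]
    refine DifferentiableOn.cpow_const (by fun_prop) fun ξ hξ ↦
      one_sub_mul_mem_slitPlane (mem_closedBall_zero_iff.1 hξ) ?_
    rwa [norm_div, norm_real, norm_of_nonneg hρ0.le, div_lt_one hρ0]
  have hρ' : (ρ : ℂ) ≠ 0 := ofReal_ne_zero.2 hρ0.ne'
  simpa [mul_assoc, mul_div_cancel₀ z hρ'] using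
    hν _ hΦ ρ (by rwa [norm_real, norm_of_nonneg hρ0.le])

end Balayage

theorem IsFractionalCauchyTransform.congr {r : ℝ} {g h : ℂ → ℂ}
    (hg : IsFractionalCauchyTransform r g) (h_eq : EqOn h g (ball 0 1)) :
    IsFractionalCauchyTransform r h :=
  hg.imp fun _ hν z hz ↦ (h_eq hz).trans (hν z hz)

theorem IsFractionalCauchyTransform.mul {p q : ℝ} (hp : 0 < p) (hq : 0 < q) {g h : ℂ → ℂ}
    (hg : IsFractionalCauchyTransform p g) (hh : IsFractionalCauchyTransform q h) :
    IsFractionalCauchyTransform (p + q) fun z ↦ g z * h z := by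
  obtain ⟨μ, hμ⟩ := hg
  obtain ⟨ν, hν⟩ := hh
  have := isProbabilityMeasureBeta hp hq
  let Ω := (sphere (0 : ℂ) 1 × sphere (0 : ℂ) 1) × ℝ
  let P : Measure Ω := ((μ : Measure (sphere (0 : ℂ) 1)).prod ν).prod (betaMeasure p q)
  let w (x : Ω) : ℂ := x.2 * x.1.1 + (1 - x.2) * x.1.2
  have hw : AEMeasurable w P := by fun_prop
  have hw_norm : ∀ᵐ x ∂P, ‖w x‖ ≤ 1 := by
    filter_upwards [Measure.quasiMeasurePreserving_snd.ae (betaMeasure_ae_mem_Ioo p q)] with x hx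
    rw [← mem_closedBall_zero_iff]
    have := convex_closedBall (0 : ℂ) 1 (sphere_subset_closedBall x.1.1.2)
      (sphere_subset_closedBall x.1.2.2) hx.1.le (sub_nonneg.2 hx.2.le) (add_sub_cancel _ _)
    simpa [w] using this
  refine (isFractionalCauchyTransform_integral hw hw_norm (p + q)).congr fun z hz ↦ ?_
  have hre (ζ : sphere (0 : ℂ) 1) : 0 < (1 - (ζ : ℂ) * z).re :=
    (sub_pos.2 (mem_ball_zero_iff.1 hz)).trans_le
      (one_sub_norm_le_re_one_sub_mul (mem_sphere_zero_iff_norm.1 ζ.2).le)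
  simp only [hμ z hz, hν z hz]
  rw [← integral_prod_mul,
    integral_prod _ (integrable_one_sub_mul_cpow_neg hw hw_norm hz (by positivity))]
  congr 1 with x
  rw [← integral_betaMeasure_cpow hp hq (hre x.1) (hre x.2)]
  congr 1 with s
  simp only [w]
  ring_nf

theorem IsFractionalCauchyTransform.pow {r : ℝ} (hr : 0 < r) {g : ℂ → ℂ}
    (hg : IsFractionalCauchyTransform r g) {n : ℕ} (hn : n ≠ 0) :
    IsFractionalCauchyTransform (n * r) fun z ↦ g z ^ n := by
  induction n, Nat.one_le_iff_ne_zero.2 hn using Nat.le_induction with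
  | base => simpa using hg
  | succ n hn' ih =>
    have hn0 : n ≠ 0 := Nat.one_le_iff_ne_zero.1 hn'
    simpa only [pow_succ, Nat.cast_add_one, add_one_mul] using (ih hn0).mul (by positivity) hr hg

theorem isFractionalCauchyTransform_exp_integral_log (ν : ProbabilityMeasure (sphere (0 : ℂ) 1))
    {β : ℝ} (hβ : 0 < β) :
    IsFractionalCauchyTransform β fun z ↦ cexp
      (β * ∫ ζ : sphere (0 : ℂ) 1, -log (1 - (ζ : ℂ) * z) ∂(ν : Measure (sphere (0 : ℂ) 1))) := by
  refine .of_tendsto (l := atTop) (G := fun (n : ℕ) z ↦ (∫ ζ : sphere (0 : ℂ) 1,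
    (1 - (ζ : ℂ) * z) ^ (-((β / n : ℝ) : ℂ)) ∂(ν : Measure (sphere (0 : ℂ) 1))) ^ n) ?_
    fun z hz ↦ ?_
  · filter_upwards [eventually_ne_atTop 0] with n hn
    have hn' : (n : ℝ) ≠ 0 := Nat.cast_ne_zero.2 hn
    have := IsFractionalCauchyTransform.pow (r := β / n) (by positivity) ⟨ν, fun z _ ↦ rfl⟩ hn
    rwa [mul_div_cancel₀ β hn'] at this
  · have hζ (ζ : sphere (0 : ℂ) 1) : ‖(ζ : ℂ)‖ ≤ 1 := (mem_sphere_zero_iff_norm.1 ζ.2).le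
    have hz' := mem_ball_zero_iff.1 hz
    rw [← integral_const_mul]
    refine (tendsto_integral_exp_div_pow (M := β * (‖z‖ ^ 2 * (1 - ‖z‖)⁻¹ / 2 + ‖z‖))
      (by fun_prop) (.of_forall fun ζ ↦ ?_)).congr fun n ↦ ?_
    · rw [norm_mul, norm_neg, norm_real, norm_of_nonneg hβ.le]
      gcongr
      exact norm_log_one_sub_mul_le (hζ ζ) hz'
    · congr 2 with ζ
      rw [cpow_def_of_ne_zero (slitPlane_ne_zero (one_sub_mul_mem_slitPlane (hζ ζ) hz'))]
      push_cast
      ring_nf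

theorem eqOn_of_id_mul_eqOn {U : Set ℂ} (hU : IsOpen U) {f g : ℂ → ℂ} (hf : ContinuousOn f U)
    (hg : ContinuousOn g U) (h : EqOn (fun z ↦ z * f z) (fun z ↦ z * g z) U) : EqOn f g U :=
  EqOn.of_subset_closure (s := U ∩ {0}ᶜ) (fun _ hz ↦ mul_left_cancel₀ hz.2 (h hz.1)) hf hg
    inter_subset_left ((dense_compl_singleton 0).open_subset_closure_inter hU)

theorem exists_probabilityMeasure_logDeriv_eq {β : ℝ} (hβ : 0 < β) {g : ℂ → ℂ}
    (hg : DifferentiableOn ℂ g (ball 0 1)) (hg_ne : ∀ z ∈ ball (0 : ℂ) 1, g z ≠ 0)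
    (hre : ∀ z ∈ ball (0 : ℂ) 1, -(β / 2) ≤ (z * logDeriv g z).re) :
    ∃ ν : ProbabilityMeasure (sphere (0 : ℂ) 1), ∀ z ∈ ball (0 : ℂ) 1, logDeriv g z =
      β * deriv (fun z ↦ ∫ ζ : sphere (0 : ℂ) 1, -log (1 - (ζ : ℂ) * z)
        ∂(ν : Measure (sphere (0 : ℂ) 1))) z := by
  have hβ' : (β : ℂ) ≠ 0 := ofReal_ne_zero.2 hβ.ne'
  have hlogDeriv : DifferentiableOn ℂ (logDeriv g) (ball 0 1) :=
    (hg.deriv isOpen_ball).div hg hg_ne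
  let q (z : ℂ) : ℂ := 1 + (β : ℂ)⁻¹ * (z * logDeriv g z)
  have hq : DifferentiableOn ℂ q (ball 0 1) := by fun_prop
  have hq_re (z) (hz : z ∈ ball (0 : ℂ) 1) : 1 / 2 ≤ (q z).re := by
    have hβ_half : β⁻¹ * -(β / 2) = -(1 / 2) := by field_simp
    have := mul_le_mul_of_nonneg_left (hre z hz) (inv_nonneg.2 hβ.le)
    rw [add_re, one_re, ← ofReal_inv, re_ofReal_mul]
    linarith
  obtain ⟨ν, hν⟩ := isFractionalCauchyTransform_one_of_half_le_re hq (by simp [q]) hq_re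
  have hζ : ∀ᵐ ζ : sphere (0 : ℂ) 1 ∂(ν : Measure (sphere (0 : ℂ) 1)), ‖(ζ : ℂ)‖ ≤ 1 :=
    .of_forall fun ζ ↦ (mem_sphere_zero_iff_norm.1 ζ.2).le
  have hK (z) (hz : z ∈ ball (0 : ℂ) 1) := hasDerivAt_integral_neg_log_one_sub_mul
    (P := (ν : Measure (sphere (0 : ℂ) 1))) (by fun_prop) hζ hz
  have hderivK := DifferentiableOn.deriv
    (fun z hz ↦ (hK z hz).differentiableAt.differentiableWithinAt) isOpen_ball
  refine ⟨ν, eqOn_of_id_mul_eqOn isOpen_ball hlogDeriv.continuousOn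
    (hderivK.continuousOn.const_mul _) fun z hz ↦ ?_⟩
  have := hν z hz
  simp only [q, ofReal_one, cpow_neg_one] at this
  rw [integral_one_sub_mul_inv (by fun_prop) hζ hz, add_right_inj,
    inv_mul_eq_iff_eq_mul₀ hβ'] at this
  simp only [(hK z hz).deriv, this]
  ring

theorem isFractionalCauchyTransform_of_le_re_mul_logDeriv {β : ℝ} (hβ : 0 < β) {g : ℂ → ℂ}
    (hg : DifferentiableOn ℂ g (ball 0 1)) (hg_zero : g 0 = 1)
    (hg_ne : ∀ z ∈ ball (0 : ℂ) 1, g z ≠ 0)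
    (hre : ∀ z ∈ ball (0 : ℂ) 1, -(β / 2) ≤ (z * logDeriv g z).re) :
    IsFractionalCauchyTransform β g := by
  obtain ⟨ν, hν⟩ := exists_probabilityMeasure_logDeriv_eq hβ hg hg_ne hre
  let K (z : ℂ) : ℂ :=
    ∫ ζ : sphere (0 : ℂ) 1, -log (1 - (ζ : ℂ) * z) ∂(ν : Measure (sphere (0 : ℂ) 1))
  have hK (z) (hz : z ∈ ball (0 : ℂ) 1) : DifferentiableAt ℂ K z :=
    (hasDerivAt_integral_neg_log_one_sub_mul (by fun_prop)
      (.of_forall fun ζ ↦ (mem_sphere_zero_iff_norm.1 ζ.2).le) hz).differentiableAt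
  have hexp (z) (hz : z ∈ ball (0 : ℂ) 1) :
      HasDerivAt (fun z ↦ cexp (β * K z)) (cexp (β * K z) * (β * deriv K z)) z :=
    ((hK z hz).hasDerivAt.const_mul _).cexp
  have hlogDeriv : EqOn (logDeriv g) (logDeriv fun z ↦ cexp (β * K z)) (ball 0 1) := fun z hz ↦ by
    rw [hν z hz, logDeriv_apply, (hexp z hz).deriv, mul_div_cancel_left₀ _ (Complex.exp_ne_zero _)]
  obtain ⟨c, -, hc⟩ := (logDeriv_eqOn_iff hg
    (fun z hz ↦ (hexp z hz).differentiableAt.differentiableWithinAt) isOpen_ball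
    (convex_ball 0 1).isPreconnected (fun z _ ↦ Complex.exp_ne_zero _) hg_ne).1 hlogDeriv
  have hc_one : c = 1 := by
    have := hc (mem_ball_self one_pos)
    simpa [K, hg_zero, eq_comm] using this
  refine (isFractionalCauchyTransform_exp_integral_log ν hβ).congr fun z hz ↦ ?_
  rw [hc hz, hc_one, one_smul]

theorem exists_measure_Icc_integral_exp_eq (ν : ProbabilityMeasure (sphere (0 : ℂ) 1)) :
    ∃ μ : Measure ℝ, IsProbabilityMeasure μ ∧ μ (Icc 0 (2 * π))ᶜ = 0 ∧
      ∀ φ : ℂ → ℂ, Measurable φ → ∫ θ : ℝ, φ (cexp (θ * I)) ∂μ =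
        ∫ ζ : sphere (0 : ℂ) 1, φ ζ ∂(ν : Measure (sphere (0 : ℂ) 1)) := by
  let a (ζ : sphere (0 : ℂ) 1) : ℝ := toIcoMod two_pi_pos 0 (arg ζ)
  have ha : Measurable a := by
    simp only [a, toIcoMod_eq_fract_mul]
    fun_prop
  have ha_exp (ζ : sphere (0 : ℂ) 1) : cexp (a ζ * I) = ζ := by
    have hperiodic : Function.Periodic (fun θ : ℝ ↦ cexp (θ * I)) (2 * π) := fun θ ↦ by
      simpa using exp_mul_I_periodic θ
    calc cexp (a ζ * I) = cexp (arg ζ * I) := hperiodic.sub_zsmul_eq _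
      _ = ζ := by
        simpa only [mem_sphere_zero_iff_norm.1 ζ.2, ofReal_one, one_mul] using
          norm_mul_exp_arg_mul_I (ζ : ℂ)
  refine ⟨(ν : Measure (sphere (0 : ℂ) 1)).map a, Measure.isProbabilityMeasure_map ha.aemeasurable,
    ?_, fun φ hφ ↦ ?_⟩
  · have ha_mem (ζ) : a ζ ∈ Icc 0 (2 * π) := by
      simpa using Ico_subset_Icc_self (toIcoMod_mem_Ico two_pi_pos 0 (arg ζ))
    rw [Measure.map_apply ha measurableSet_Icc.compl, preimage_compl,
      preimage_eq_univ_iff.2 (range_subset_iff.2 ha_mem), compl_univ, measure_empty]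
  · rw [integral_map ha.aemeasurable (AEMeasurable.aestronglyMeasurable (by fun_prop))]
    simp only [ha_exp]

theorem stmt_1_general (α : ℝ) (f : ℂ → ℂ) (hf : f ∈ zalcF α) :
    ∃ ν : Measure ℝ, IsProbabilityMeasure ν ∧ ν (Set.Icc 0 (2*π))ᶜ = 0 ∧
      ∀ z ∈ ball (0:ℂ) 1,
        deriv f z = ∫ θ : ℝ, (1 - Complex.exp (θ * Complex.I) * z) ^ ((2*α - 2 : ℂ)) ∂ν := by
  obtain ⟨hf_an, -, hf'_zero, hf'_ne, hf_re⟩ := hf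
  have hα : α < 1 := by simpa using hf_re 0 (mem_ball_self one_pos)
  have hf' : DifferentiableOn ℂ (deriv f) (ball 0 1) :=
    hf_an.differentiableOn.deriv isOpen_ball
  obtain ⟨ν, hν⟩ := isFractionalCauchyTransform_of_le_re_mul_logDeriv (β := 2 - 2 * α)
    (by linarith) hf' hf'_zero hf'_ne fun z hz ↦ by
      have := hf_re z hz
      rw [add_re, one_re, mul_div_assoc, ← logDeriv_apply] at this
      linarith
  obtain ⟨μ, hμ_prob, hμ_supp, hμ⟩ := exists_measure_Icc_integral_exp_eq ν
  refine ⟨μ, hμ_prob, hμ_supp, fun z hz ↦ ?_⟩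
  rw [hν z hz, ← hμ (fun ζ ↦ (1 - ζ * z) ^ (-((2 - 2 * α : ℝ) : ℂ))) (by fun_prop)]
  push_cast
  rw [neg_sub]

theorem stmt_1 (α : ℝ) (hα₁ : -(1/2 : ℝ) ≤ α) (hα₂ : α < 1)
    (f : ℂ → ℂ) (hf : f ∈ zalcF α) :
    ∃ ν : Measure ℝ, IsProbabilityMeasure ν ∧ ν (Set.Icc 0 (2*π))ᶜ = 0 ∧
      ∀ z ∈ ball (0:ℂ) 1,
        deriv f z = ∫ θ : ℝ, (1 - Complex.exp (θ * Complex.I) * z) ^ ((2*α - 2 : ℂ)) ∂ν :=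
  stmt_1_general α f hf
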